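/- The set 𝔸 of real numbers algebraic over ℚ is not contained in any finitely generated subfield of ℝ: for every finite subset s ⊆ ℝ, there exists a real number x that is algebraic over ℚ but does not lie in the subfield of ℝ generated by s. -/

import Mathlib

open IntermediateField in
open scoped IntermediateField.algebraAdjoinAdjoin in
theorem stmt_10 (s : Finset ℝ) :
    ∃ x : ℝ, IsAlgebraic ℚ x ∧ x ∉ Subfield.closure (s : Set ℝ) := by
  have hle : Subfield.closure (s : Set ℝ) ≤ (adjoin ℚ (s : Set ℝ)).toSubfield :=
    Subfield.closure_le.2 (subset_adjoin ℚ _)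
  set K := adjoin ℚ (s : Set ℝ) with hK
  have hfg : Algebra.EssFiniteType ℚ K := essFiniteType_iff.2 ⟨s, rfl⟩
  obtain ⟨t, ht⟩ := exists_finset_isTranscendenceBasis ℚ K
  have halg := ht.isAlgebraic_field
  let S : Set K := Set.range ((↑) : t → K)
  let A := Algebra.adjoin ℚ S
  let F := adjoin ℚ S
  change Algebra.IsAlgebraic F K at halg
  have hF : Algebra.EssFiniteType F K := Algebra.EssFiniteType.of_comp ℚ F K
  have hfin : Module.Finite F K := Algebra.finite_of_essFiniteType_of_isAlgebraic
  have e : MvPolynomial t ℚ ≃ₐ[ℚ] A := ht.1.aevalEquiv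
  have hA : IsIntegrallyClosed A := IsIntegrallyClosed.of_equiv e.toRingEquiv
  let φ : A →+* ℚ := (MvPolynomial.constantCoeff).comp e.symm.toRingEquiv.toRingHom
  obtain ⟨p, hpgt, hp⟩ := Nat.exists_infinite_primes (Module.finrank F K + 1)
  have hirr : Irreducible (Polynomial.X ^ p - Polynomial.C (2 : F)) := by
    refine X_pow_sub_C_irreducible_of_prime hp fun b hb => ?_
    obtain ⟨a, ha⟩ : ∃ a : A, algebraMap A F a = b := by
      refine IsIntegrallyClosed.exists_algebraMap_eq_of_isIntegral_pow hp.pos ?_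
      rw [hb]
      exact map_ofNat (algebraMap A F) 2 ▸ isIntegral_algebraMap
    have ha2 : a ^ p = 2 := by
      apply FaithfulSMul.algebraMap_injective A F
      rw [map_pow, ha, hb, map_ofNat]
    have hq : (φ a) ^ p = 2 := by rw [← map_pow, ha2, map_ofNat]
    have h0 : φ a ≠ 0 := by
      intro h
      rw [h, zero_pow hp.ne_zero] at hq
      norm_num at hq
    have hv := congrArg (padicValRat 2) hq
    rw [padicValRat.pow] at hv
    have h22 : padicValRat 2 (2 : ℚ) = 1 := by
      exact_mod_cast padicValRat.self (p := 2) (by norm_num)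
    rw [h22] at hv
    have := Int.eq_one_or_neg_one_of_mul_eq_one hv
    have := hp.two_le
    omega
  have hxp : ((2 : ℝ) ^ ((p : ℝ)⁻¹)) ^ p = 2 := Real.rpow_inv_natCast_pow (by norm_num) hp.ne_zero
  refine ⟨(2 : ℝ) ^ ((p : ℝ)⁻¹), ?_, fun hx => ?_⟩
  · refine IsAlgebraic.of_pow hp.pos ?_
    rw [hxp]
    exact map_ofNat (algebraMap ℚ ℝ) 2 ▸ isAlgebraic_algebraMap (2 : ℚ)
  · let y : K := ⟨_, hle hx⟩
    have hy : y ^ p = 2 := Subtype.ext hxp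
    have hmin := minpoly.eq_of_irreducible_of_monic (x := y) hirr
      (by simp [hy]; exact sub_self _) (Polynomial.monic_X_pow_sub_C _ hp.ne_zero)
    have hd := minpoly.natDegree_le (A := F) y
    rw [← hmin, Polynomial.natDegree_X_pow_sub_C] at hd
    omega
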